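/- Let ψ be a regular N-function such that both ψ and its conjugate ψ* satisfy the Δ₂-condition. Then there exist constants c, C > 0, depending only on Δ₂(ψ) and Δ₂(ψ*), such that for all t ≥ 0 and all a ≥ 0: c·(ψ*)_{ψ'(a)}(t) ≤ (ψ_a)*(t) ≤ C·(ψ*)_{ψ'(a)}(t), where (ψ_a)* denotes the conjugate of the shifted N-function ψ_a and (ψ*)_{ψ'(a)} denotes the shifted N-function of ψ* with shift ψ'(a). -/

import Mathlib

open Real Filter Set Topology

noncomputable section

/-- An N-function: convex on `[0,∞)`, vanishing at `0`, positive on `(0,∞)`,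
with `ψ t / t → 0` as `t → 0⁺` and `ψ t / t → ∞` as `t → ∞`. -/
def IsNFunction (ψ : ℝ → ℝ) : Prop :=
  ConvexOn ℝ (Set.Ici 0) ψ ∧ ψ 0 = 0 ∧ (∀ t > 0, 0 < ψ t) ∧
    Filter.Tendsto (fun t => ψ t / t) (nhdsWithin 0 (Set.Ioi 0)) (nhds 0) ∧
    Filter.Tendsto (fun t => ψ t / t) Filter.atTop Filter.atTop

/-- A regular N-function: an N-function which is `C¹` on `[0,∞)`, `C²` on `(0,∞)`,
with `ψ'' t > 0` for all `t > 0`. -/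
def IsRegularNFunction (ψ : ℝ → ℝ) : Prop :=
  IsNFunction ψ ∧ ContDiffOn ℝ 1 ψ (Set.Ici 0) ∧ ContDiffOn ℝ 2 ψ (Set.Ioi 0) ∧
    ∀ t > 0, 0 < deriv (deriv ψ) t

/-- A balanced N-function with characteristics `(γ₁, γ₂)`. -/
def IsBalancedNFunction (ψ : ℝ → ℝ) (γ₁ γ₂ : ℝ) : Prop :=
  IsRegularNFunction ψ ∧ 0 < γ₁ ∧ γ₁ ≤ 1 ∧ 1 ≤ γ₂ ∧
    ∀ t > 0, γ₁ * deriv ψ t ≤ t * deriv (deriv ψ) t ∧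
      t * deriv (deriv ψ) t ≤ γ₂ * deriv ψ t

/-- The conjugate N-function `ψ*(t) = sup_{s ≥ 0} (s·t − ψ(s))`. -/
def conjNF (ψ : ℝ → ℝ) (t : ℝ) : ℝ :=
  ⨆ s : Set.Ici (0:ℝ), ((s : ℝ) * t - ψ s)

/-- `ψ` satisfies the Δ₂-condition with constant `K`. -/
def SatisfiesDelta2 (ψ : ℝ → ℝ) (K : ℝ) : Prop :=
  2 < K ∧ ∀ t ≥ (0:ℝ), ψ (2 * t) ≤ K * ψ t

/-- The derivative `ψ'_a(t) = ψ'(a+t)·t/(a+t)` of the shifted N-function. -/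
def shiftDF (ψ : ℝ → ℝ) (a t : ℝ) : ℝ := deriv ψ (a + t) * t / (a + t)

/-- The shifted N-function `ψ_a(t) = ∫₀ᵗ ψ'(a+s)·s/(a+s) ds`. -/
def shiftNF (ψ : ℝ → ℝ) (a t : ℝ) : ℝ := ∫ s in (0:ℝ)..t, shiftDF ψ a s

/-- Frobenius norm of a `d×n` real matrix. -/
def frobNorm {d n : ℕ} (P : Fin d → Fin n → ℝ) : ℝ :=
  Real.sqrt (∑ i : Fin d, ∑ j : Fin n, (P i j) ^ 2)

/-- Frobenius inner product `P : Q` of two `d×n` real matrices. -/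
def frobInner {d n : ℕ} (P Q : Fin d → Fin n → ℝ) : ℝ :=
  ∑ i : Fin d, ∑ j : Fin n, P i j * Q i j

/-- `F(P) = √(φ'(|P|)/|P|)·P` (equal to `0` at `P = 0`). -/
def FmapNF (φ : ℝ → ℝ) {d n : ℕ} (P : Fin d → Fin n → ℝ) : Fin d → Fin n → ℝ :=
  Real.sqrt (deriv φ (frobNorm P) / frobNorm P) • P

/-- `F*(P) = √((φ*)'(|P|)/|P|)·P` (equal to `0` at `P = 0`). -/
def FstarNF (φ : ℝ → ℝ) {d n : ℕ} (P : Fin d → Fin n → ℝ) : Fin d → Fin n → ℝ :=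
  Real.sqrt (deriv (conjNF φ) (frobNorm P) / frobNorm P) • P

/-- The standard basis matrix with a `1` in entry `(k,l)`. -/
def basisMat {d n : ℕ} (k : Fin d) (l : Fin n) : Fin d → Fin n → ℝ :=
  fun i j => if i = k ∧ j = l then 1 else 0

/-- `𝒜` has `φ`-structure with constants `(γ₃, γ₄)`. -/
def HasPhiStructure {d n : ℕ} (A : (Fin d → Fin n → ℝ) → (Fin d → Fin n → ℝ))
    (φ : ℝ → ℝ) (γ₃ γ₄ : ℝ) : Prop :=
  0 < γ₃ ∧ γ₃ ≤ 1 ∧ 1 < γ₄ ∧ Continuous A ∧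
    ContDiffOn ℝ 1 A {P | P ≠ 0} ∧ A 0 = 0 ∧
    (∀ P : Fin d → Fin n → ℝ, P ≠ 0 → ∀ Q : Fin d → Fin n → ℝ,
      γ₃ * (deriv φ (frobNorm P) / frobNorm P) * (frobNorm Q) ^ 2 ≤
        ∑ i : Fin d, ∑ j : Fin n, ∑ k : Fin d, ∑ l : Fin n,
          fderiv ℝ A P (basisMat k l) i j * Q i j * Q k l) ∧
    (∀ P : Fin d → Fin n → ℝ, P ≠ 0 → ∀ (i k : Fin d) (j l : Fin n),
      |fderiv ℝ A P (basisMat k l) i j| ≤ γ₄ * (deriv φ (frobNorm P) / frobNorm P))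


/-- Doubling of the subgradient. -/
lemma doubling_aux {ψ f : ℝ → ℝ} {K : ℝ} (h0 : ∀ t ≥ 0, 0 ≤ ψ t) (hz : ψ 0 = 0) (hf : ∀ t ≥ 0, 0 ≤ f t)
    (hf0 : f 0 = 0)
    (hsub : ∀ t ≥ 0, ∀ s ≥ 0, ψ t + f t * (s - t) ≤ ψ s) (hK : SatisfiesDelta2 ψ K) :
    ∀ t ≥ 0, f (2 * t) ≤ K ^ 2 * f t := by
  obtain ⟨hK2, hK⟩ := hK
  intro t ht
  rcases ht.lt_or_eq with h | h
  swap
  · simp [← h, hf0]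
  have h1 := hsub (2 * t) (by positivity) (4 * t) (by positivity)
  have h2 := hsub t ht 0 le_rfl
  have h3 := hK t ht
  have h4 := hK (2 * t) (by positivity)
  have h5 := h0 (2 * t) (by positivity)
  have h6 := hf t ht
  rw [hz] at h2
  have e : 2 * (2 * t) = 4 * t := by ring
  rw [e] at h4
  have h7 : ψ (4 * t) ≤ K ^ 2 * (f t * t) := by
    calc ψ (4 * t) ≤ K * ψ (2 * t) := h4
      _ ≤ K * (K * ψ t) := by gcongr
      _ = K ^ 2 * ψ t := by ring
      _ ≤ K ^ 2 * (f t * t) := by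
        gcongr
        linarith
  have h8 : f (2 * t) * (2 * t) ≤ K ^ 2 * (f t * t) := by nlinarith
  have h9 : 0 ≤ f (2 * t) := hf _ (by positivity)
  have h10 : f (2 * t) * t ≤ (K ^ 2 * f t) * t := by nlinarith [mul_nonneg h9 ht]
  exact le_of_mul_le_mul_right h10 h

/-- Monotonicity of the derivative of the shifted function. -/
lemma shift_mono {f : ℝ → ℝ} (hf : MonotoneOn f (Ici 0)) (hf0 : 0 ≤ f 0) {a : ℝ} (ha : 0 ≤ a) :
    MonotoneOn (fun s => f (a + s) * s / (a + s)) (Ici 0) := by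
  intro x hx y hy hxy
  simp only [mem_Ici] at hx hy
  have hn : ∀ z ≥ 0, 0 ≤ f z := fun z hz => hf0.trans (hf (by simp) hz hz)
  rcases hx.lt_or_eq with h | h
  · have hy' : 0 < y := h.trans_le hxy
    have h1 : x / (a + x) ≤ y / (a + y) := by
      rw [div_le_div_iff₀ (by positivity) (by positivity)]
      nlinarith
    have h2 : f (a + x) ≤ f (a + y) := hf (by simp; positivity) (by simp; positivity) (by linarith)
    have h3 := hn (a + y) (by positivity)
    simp only [mul_div_assoc]
    gcongr
  · subst h
    have h3 := hn (a + y) (by positivity)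
    simp only [mul_zero, zero_div]
    positivity

lemma mono_integral {k : ℝ → ℝ} (hk : MonotoneOn k (Ici 0)) {x y : ℝ} (hx : 0 ≤ x) (hxy : x ≤ y) :
    (y - x) * k x ≤ ∫ s in x..y, k s ∧ ∫ s in x..y, k s ≤ (y - x) * k y := by
  have hm : MonotoneOn k (uIcc x y) := hk.mono (by
    rw [uIcc_of_le hxy]; intro z hz; exact hx.trans hz.1)
  have hi := hm.intervalIntegrable (μ := MeasureTheory.volume)
  constructor
  · have := intervalIntegral.integral_mono_on hxy (intervalIntegrable_const (c := k x)) hi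
      (fun z hz => hk hx (hx.trans hz.1) hz.1)
    simpa using this
  · have := intervalIntegral.integral_mono_on hxy hi (intervalIntegrable_const (c := k y))
      (fun z hz => hk (hx.trans hz.1) (hx.trans hxy) hz.2)
    simpa using this

lemma mono_integral' {k : ℝ → ℝ} (hk : MonotoneOn k (Ici 0)) {x y : ℝ} (hx : 0 ≤ x) (hxy : x ≤ y) :
    ∫ s in (0:ℝ)..y, k s = (∫ s in (0:ℝ)..x, k s) + ∫ s in x..y, k s := by
  have hi : ∀ p q : ℝ, 0 ≤ p → 0 ≤ q → IntervalIntegrable k MeasureTheory.volume p q := by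
    intro p q hp hq
    refine (hk.mono ?_).intervalIntegrable
    intro z hz
    exact (le_min hp hq).trans hz.1
  rw [intervalIntegral.integral_add_adjacent_intervals (hi _ _ le_rfl hx) (hi _ _ hx (hx.trans hxy))]

lemma core {f g : ℝ → ℝ} {L M N a : ℝ} (f0 : f 0 = 0) (fm : StrictMonoOn f (Ici 0))
    (fc : ContinuousOn f (Ici 0)) (ft : Tendsto f atTop atTop) (gm : MonotoneOn g (Ici 0))
    (gf : ∀ s ≥ 0, g (f s) = s) (hL : 2 ≤ L) (hM : 1 ≤ M) (hN : 1 ≤ N)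
    (fL : ∀ t ≥ 0, f (2 * t) ≤ L * f t) (gM : ∀ t ≥ 0, g (2 * t) ≤ M * g t)
    (gN : ∀ t ≥ 0, g (L * t) ≤ N * g t) (ha : 0 ≤ a) (t : ℝ) (ht : 0 ≤ t) :
    1 / (4 * M ^ 2 * L) * (∫ s in (0:ℝ)..t, g (f a + s) * s / (f a + s)) ≤
      conjNF (fun r => ∫ s in (0:ℝ)..r, f (a + s) * s / (a + s)) t ∧
    conjNF (fun r => ∫ s in (0:ℝ)..r, f (a + s) * s / (a + s)) t ≤
      (8 * M * N) * (∫ s in (0:ℝ)..t, g (f a + s) * s / (f a + s)) := by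
  set b := f a with hb
  have fn : ∀ z ≥ 0, 0 ≤ f z := fun z hz => f0 ▸ fm.monotoneOn (by simp) hz hz
  have fp : ∀ z > 0, 0 < f z := fun z hz => f0 ▸ fm (by simp) hz.le hz
  have g0 : g 0 = 0 := by simpa [f0] using gf 0 le_rfl
  have hb0 : 0 ≤ b := fn a ha
  have gn : ∀ z ≥ 0, 0 ≤ g z := fun z hz => g0 ▸ gm (by simp) hz hz
  set h : ℝ → ℝ := fun s => f (a + s) * s / (a + s) with hh
  set k : ℝ → ℝ := fun s => g (b + s) * s / (b + s) with hk
  have hm : MonotoneOn h (Ici 0) := shift_mono fm.monotoneOn f0.ge ha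
  have km : MonotoneOn k (Ici 0) := shift_mono gm g0.ge hb0
  have h0 : h 0 = 0 := by simp [hh]
  have k0 : k 0 = 0 := by simp [hk]
  have hn : ∀ z ≥ 0, 0 ≤ h z := fun z hz => h0 ▸ hm (by simp) hz hz
  have kn : ∀ z ≥ 0, 0 ≤ k z := fun z hz => k0 ▸ km (by simp) hz hz
  -- the two functions are quasi-inverse
  have quasi : ∀ s ≥ 0, k (h s) ≤ M * L * s ∧ s ≤ 2 * N * k (h s) := by
    intro s hs
    rcases hs.lt_or_eq with hs' | hs'
    swap
    · simp [← hs', h0, k0]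
    have has : 0 < a + s := by positivity
    have hF : 0 < f (a + s) := fp _ has
    have hu : h s * (a + s) = f (a + s) * s := by simp only [hh]; field_simp
    have hu0 : 0 < h s := by simp only [hh]; positivity
    have hule : h s ≤ f (a + s) := by
      simp only [hh]; rw [div_le_iff₀ has]; gcongr; linarith
    have hble : b ≤ f (a + s) := fm.monotoneOn ha has.le (by linarith)
    have hup : b + h s ≤ 2 * f (a + s) := by linarith
    have hlo : f (a + s) ≤ L * (b + h s) := by
      rcases le_total s a with hsa | hsa
      · have h1 : f (a + s) ≤ f (2 * a) :=
          fm.monotoneOn has.le (by simp; linarith) (by linarith)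
        have h2 := fL a ha
        nlinarith
      · have h1 : f (a + s) ≤ 2 * h s := by
          have : f (a + s) * (a + s) ≤ (2 * h s) * (a + s) := by nlinarith
          exact le_of_mul_le_mul_right this has
        nlinarith
    have hbu : 0 < b + h s := by positivity
    have hg1 : g (b + h s) ≤ M * (a + s) := by
      calc g (b + h s) ≤ g (2 * f (a + s)) := gm hbu.le (by simp; positivity) hup
        _ ≤ M * g (f (a + s)) := gM _ hF.le
        _ = _ := by rw [gf _ has.le]
    have hg2 : a + s ≤ N * g (b + h s) := by
      calc a + s = g (f (a + s)) := (gf _ has.le).symm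
        _ ≤ g (L * (b + h s)) := gm hF.le (by simp; positivity) hlo
        _ ≤ _ := gN _ hbu.le
    have hks : k (h s) * (b + h s) = g (b + h s) * h s := by simp only [hk]; field_simp
    constructor
    · have : k (h s) * (b + h s) ≤ (M * L * s) * (b + h s) := by
        calc k (h s) * (b + h s) = g (b + h s) * h s := hks
          _ ≤ (M * (a + s)) * h s := by gcongr
          _ = M * (f (a + s) * s) := by rw [← hu]; ring
          _ ≤ M * (L * (b + h s) * s) := by gcongr
          _ = _ := by ring
      exact le_of_mul_le_mul_right this hbu
    · have : s * (b + h s) ≤ (2 * N * k (h s)) * (b + h s) := by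
        calc s * (b + h s) ≤ s * (2 * f (a + s)) := by gcongr
          _ = 2 * (h s * (a + s)) := by rw [hu]; ring
          _ ≤ 2 * (h s * (N * g (b + h s))) := by gcongr
          _ = 2 * N * (g (b + h s) * h s) := by ring
          _ = _ := by rw [← hks]; ring
      exact le_of_mul_le_mul_right this hbu
  -- surjectivity of h
  have hsurj : ∀ u ≥ 0, ∃ s ≥ 0, h s = u := by
    intro u hu
    rcases hu.lt_or_eq with hu' | hu'
    swap
    · exact ⟨0, le_rfl, by rw [h0, hu']⟩
    obtain ⟨R, hR⟩ := (((ft.eventually_ge_atTop (2 * u)).and (eventually_ge_atTop (a + 1)))).exists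
    obtain ⟨hR1, hR2⟩ := hR
    have hR0 : 0 ≤ R := by linarith
    have hRu : u ≤ h R := by
      have hp : 0 < a + R := by linarith
      have h1 : 2 * u ≤ f (a + R) := hR1.trans (fm.monotoneOn hR0 hp.le (by linarith))
      simp only [hh]; rw [le_div_iff₀ hp]
      nlinarith
    have hcont : ContinuousOn h (Icc 0 R) := by
      intro x hx
      rcases hx.1.lt_or_eq with hx' | hx'
      · have hp : 0 < a + x := by linarith
        have hc : ContinuousAt f (a + x) := fc.continuousAt (Ici_mem_nhds hp)
        have hc' : ContinuousAt (fun s => f (a + s)) x :=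
          ContinuousAt.comp (f := fun s => a + s) (g := f) hc (by fun_prop)
        exact ((hc'.mul continuousAt_id).div (by fun_prop) hp.ne').continuousWithinAt
      · subst hx'
        have hb1 : Tendsto (fun s => f (a + s)) (𝓝[Icc 0 R] 0) (𝓝 (f a)) := by
          refine (fc a ha).tendsto.comp ?_
          refine tendsto_nhdsWithin_iff.2 ⟨?_, ?_⟩
          · have : ContinuousWithinAt (fun s : ℝ => a + s) (Icc 0 R) 0 := by fun_prop
            simpa [ContinuousWithinAt] using this
          · filter_upwards [self_mem_nhdsWithin] with z hz
            simp only [mem_Ici]; linarith [hz.1]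
        rcases ha.lt_or_eq with ha' | ha'
        · have hid : Tendsto (fun s : ℝ => s) (𝓝[Icc 0 R] 0) (𝓝 0) := tendsto_id.mono_left nhdsWithin_le_nhds
          have hid2 : Tendsto (fun s : ℝ => a + s) (𝓝[Icc 0 R] 0) (𝓝 a) := by
            simpa using hid.const_add a
          have := (hb1.mul hid).div hid2 ha'.ne'
          have e0 : h 0 = f a * 0 / a := by simp [hh]
          rw [ContinuousWithinAt, e0]
          exact this
        · subst ha'
          have e : h = fun s => f s := by
            funext s
            rcases eq_or_ne s 0 with rfl | hs
            · simp [h0, f0]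
            · simp only [hh, zero_add]; field_simp
          rw [e]
          exact (fc 0 (by simp)).mono (fun z hz => hz.1)
    obtain ⟨s, hs, hs'⟩ := intermediate_value_Icc hR0 hcont ⟨by rw [h0]; exact hu, hRu⟩
    exact ⟨s, hs.1, hs'⟩
  -- the half-argument comparison
  have khalf : k t ≤ 2 * M * k (t / 2) := by
    rcases ht.lt_or_eq with ht' | ht'
    swap
    · simp [← ht', k0]
    have h1 : g (b + t) ≤ M * g (b + t / 2) := by
      refine (gm (by simp; positivity) (by simp; positivity) ?_).trans (gM _ (by positivity))
      linarith
    have h2 : t / (b + t) ≤ t / (b + t / 2) := by gcongr; linarith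
    have h3 := gn (b + t / 2) (by positivity)
    simp only [hk]
    calc g (b + t) * t / (b + t) = g (b + t) * (t / (b + t)) := by ring
      _ ≤ (M * g (b + t / 2)) * (t / (b + t / 2)) := by gcongr
      _ = _ := by ring
  have H1 : ∫ s in (0:ℝ)..t, k s ≤ t * k t := by
    simpa using (mono_integral km le_rfl ht).2
  have H2 : t / 2 * k (t / 2) ≤ ∫ s in (0:ℝ)..t, k s := by
    have h1 := (mono_integral km (x := t / 2) (y := t) (by positivity) (by linarith)).1
    have h2 := (mono_integral km (x := 0) (y := t / 2) le_rfl (by positivity)).1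
    rw [mono_integral' km (x := t / 2) (y := t) (by positivity) (by linarith)]
    rw [k0] at h2
    linarith
  obtain ⟨s₀, hs₀, es₀⟩ := hsurj t ht
  obtain ⟨s₁, hs₁, es₁⟩ := hsurj (t / 2) (by positivity)
  have hub : ∀ s : Ici (0:ℝ), (s : ℝ) * t - (∫ x in (0:ℝ)..s, h x) ≤ s₀ * t := by
    rintro ⟨s, hs⟩
    simp only [mem_Ici] at hs
    simp only
    have hpos : ∀ x ≥ 0, 0 ≤ ∫ y in (0:ℝ)..x, h y := by
      intro x hx
      have := (mono_integral hm le_rfl hx).1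
      rw [h0] at this; linarith
    rcases le_total s s₀ with hle | hle
    · have := hpos s hs
      nlinarith
    · rw [mono_integral' hm hs₀ hle]
      have h1 := (mono_integral hm hs₀ hle).1
      have h2 := hpos s₀ hs₀
      rw [es₀] at h1
      linarith
  have hbdd : BddAbove (range fun s : Ici (0:ℝ) => (s : ℝ) * t - (∫ x in (0:ℝ)..s, h x)) :=
    ⟨s₀ * t, by rintro _ ⟨s, rfl⟩; exact hub s⟩
  constructor
  · have h1 : s₁ * t - (∫ x in (0:ℝ)..s₁, h x) ≤
        conjNF (fun r => ∫ s in (0:ℝ)..r, f (a + s) * s / (a + s)) t :=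
      le_ciSup hbdd ⟨s₁, hs₁⟩
    have h2 := (mono_integral hm le_rfl hs₁).2
    have h3 := (quasi s₁ hs₁).1
    rw [es₁] at h2 h3
    refine le_trans ?_ h1
    rw [one_div, inv_mul_le_iff₀ (by positivity)]
    calc ∫ s in (0:ℝ)..t, k s ≤ t * k t := H1
      _ ≤ t * (2 * M * k (t / 2)) := by gcongr
      _ ≤ t * (2 * M * (M * L * s₁)) := by gcongr
      _ = (4 * M ^ 2 * L) * (s₁ * t / 2) := by ring
      _ ≤ _ := by gcongr; linarith
  · have h1 : conjNF (fun r => ∫ s in (0:ℝ)..r, f (a + s) * s / (a + s)) t ≤ s₀ * t :=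
      haveI : Nonempty (Ici (0:ℝ)) := ⟨⟨0, by simp⟩⟩
      ciSup_le hub
    have h3 := (quasi s₀ hs₀).2
    rw [es₀] at h3
    calc _ ≤ s₀ * t := h1
      _ ≤ (2 * N * k t) * t := by gcongr
      _ ≤ (2 * N * (2 * M * k (t / 2))) * t := by gcongr
      _ = (8 * M * N) * (t / 2 * k (t / 2)) := by ring
      _ ≤ _ := by gcongr

lemma regular_facts {ψ : ℝ → ℝ} (hψ : IsRegularNFunction ψ) :
    deriv ψ 0 = 0 ∧ StrictMonoOn (deriv ψ) (Ici 0) ∧ ContinuousOn (deriv ψ) (Ici 0) ∧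
    Tendsto (deriv ψ) atTop atTop ∧
    ∀ t ≥ 0, ∀ s ≥ 0, ψ t + deriv ψ t * (s - t) ≤ ψ s := by
  obtain ⟨⟨hconv, hz, hpos, hlim0, hlim⟩, hc1, hc2, hd2⟩ := hψ
  have hslope : slope ψ 0 = fun t => ψ t / t := by
    funext t; simp [slope_def_field, hz]
  have key : ∀ d, HasDerivWithinAt ψ d (Ioi 0) 0 → d = 0 := by
    intro d hd
    rw [hasDerivWithinAt_iff_tendsto_slope' (by simp), hslope] at hd
    exact tendsto_nhds_unique hd hlim0
  have f0 : deriv ψ 0 = 0 := by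
    by_cases h : DifferentiableAt ℝ ψ 0
    · exact key _ h.hasDerivAt.hasDerivWithinAt
    · exact deriv_zero_of_not_differentiableAt h
  have hdw : derivWithin ψ (Ici 0) 0 = 0 := by
    have h : DifferentiableWithinAt ℝ ψ (Ici 0) 0 := hc1.differentiableOn (by simp) 0 (by simp)
    exact key _ (h.hasDerivWithinAt.mono Ioi_subset_Ici_self)
  have hda : ∀ t > 0, DifferentiableAt ℝ ψ t := fun t ht =>
    (hc1.differentiableOn (by simp) t (le_of_lt ht)).differentiableAt (Ici_mem_nhds ht)
  have fc : ContinuousOn (deriv ψ) (Ici 0) := by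
    refine (hc1.continuousOn_derivWithin (uniqueDiffOn_Ici 0) le_rfl).congr ?_
    intro t ht
    rcases (mem_Ici.1 ht).lt_or_eq with h | h
    · exact (derivWithin_of_mem_nhds (Ici_mem_nhds h)).symm
    · rw [← h, f0, hdw]
  have fm : StrictMonoOn (deriv ψ) (Ici 0) := by
    refine strictMonoOn_of_deriv_pos (convex_Ici 0) fc ?_
    intro x hx
    rw [interior_Ici] at hx
    exact hd2 x hx
  have hψn : ∀ t ≥ 0, 0 ≤ ψ t := fun t ht => by
    rcases ht.lt_or_eq with h | h
    · exact (hpos t h).le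
    · rw [← h, hz]
  have fsub : ∀ t ≥ 0, ∀ s ≥ 0, ψ t + deriv ψ t * (s - t) ≤ ψ s := by
    intro t ht s hs
    rcases ht.lt_or_eq with h | h
    swap
    · rw [← h, f0, hz]; simpa using hψn s hs
    rcases lt_trichotomy s t with h' | h' | h'
    · have h1 := hconv.slope_le_deriv hs ht h' (hda t h)
      rw [slope_def_field, div_le_iff₀ (by linarith)] at h1
      linarith
    · simp [h']
    · have h1 := hconv.deriv_le_slope ht hs h' (hda t h)
      rw [slope_def_field, le_div_iff₀ (by linarith)] at h1
      linarith
  refine ⟨f0, fm, fc, ?_, fsub⟩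
  refine tendsto_atTop_mono' _ ?_ hlim
  filter_upwards [eventually_gt_atTop 0] with t ht
  have := fsub t ht.le 0 le_rfl
  rw [hz] at this
  rw [div_le_iff₀ ht]
  linarith

lemma conj_facts {ψ f : ℝ → ℝ} (hz : ψ 0 = 0) (hn : ∀ t ≥ 0, 0 ≤ ψ t) (f0 : f 0 = 0)
    (fm : StrictMonoOn f (Ici 0)) (fc : ContinuousOn f (Ici 0)) (ft : Tendsto f atTop atTop)
    (fsub : ∀ t ≥ 0, ∀ s ≥ 0, ψ t + f t * (s - t) ≤ ψ s) :
    MonotoneOn (deriv (conjNF ψ)) (Ici 0) ∧ (∀ s ≥ 0, deriv (conjNF ψ) (f s) = s) ∧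
    conjNF ψ 0 = 0 ∧ (∀ t ≥ 0, 0 ≤ conjNF ψ t) ∧
    ∀ t ≥ 0, ∀ s ≥ 0, conjNF ψ t + deriv (conjNF ψ) t * (s - t) ≤ conjNF ψ s := by
  haveI : Nonempty (Ici (0:ℝ)) := ⟨⟨0, by simp⟩⟩
  have fsurj : ∀ v ≥ 0, ∃ s ≥ 0, f s = v := by
    intro v hv
    obtain ⟨R, hR1, hR2⟩ := ((ft.eventually_ge_atTop v).and (eventually_ge_atTop 0)).exists
    obtain ⟨s, hs, e⟩ := intermediate_value_Icc hR2 (fc.mono (fun z hz => hz.1))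
      ⟨by rw [f0]; exact hv, hR1⟩
    exact ⟨s, hs.1, e⟩
  have fp : ∀ z ≥ 0, 0 ≤ f z := fun z hz => f0 ▸ fm.monotoneOn (by simp) hz hz
  -- extension of f to the line
  set F : ℝ → ℝ := fun x => if 0 ≤ x then f x else x with hF
  have Fm : StrictMono F := by
    intro x y hxy
    simp only [hF]
    by_cases hx : 0 ≤ x
    · have hy : 0 ≤ y := hx.trans hxy.le
      simp only [hx, hy, if_true]; exact fm hx hy hxy
    · by_cases hy : 0 ≤ y
      · simp only [hx, hy, if_true, if_false]; have := fp y hy; linarith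
      · simp only [hx, hy, if_false]; exact hxy
  have Fs : Function.Surjective F := by
    intro v
    by_cases hv : 0 ≤ v
    · obtain ⟨s, hs, e⟩ := fsurj v hv
      exact ⟨s, by simp [hF, hs, e]⟩
    · exact ⟨v, by simp [hF, hv]⟩
  set e := StrictMono.orderIsoOfSurjective F Fm Fs with he
  have heF : ∀ x, e x = F x := fun x => rfl
  set G : ℝ → ℝ := fun v => max (e.symm v) 0 with hG
  have Gc : Continuous G := e.symm.continuous.max continuous_const
  have Gm : Monotone G := fun x y h => max_le_max (e.symm.monotone h) le_rfl
  have Gn : ∀ v, 0 ≤ G v := fun v => le_max_right _ _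
  have Gf : ∀ s ≥ 0, G (f s) = s := by
    intro s hs
    have h1 : f s = e s := by rw [heF]; simp [hF, hs]
    simp only [hG]
    rw [h1, e.symm_apply_apply, max_eq_left hs]
  have fG : ∀ v ≥ 0, f (G v) = v := by
    intro v hv
    obtain ⟨s, hs, rfl⟩ := fsurj v hv
    rw [Gf s hs]
  have Gneg : ∀ v ≤ 0, G v = 0 := by
    intro v hv
    have h1 := Gm hv
    have h2 : G 0 = 0 := by simpa [f0] using Gf 0 le_rfl
    linarith [Gn v]
  -- the supremum is attained at G v
  have hub : ∀ v, ∀ s : Ici (0:ℝ), (s : ℝ) * v - ψ s ≤ G v * v - ψ (G v) := by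
    rintro v ⟨s, hs⟩
    simp only [mem_Ici] at hs
    simp only
    rcases le_total 0 v with hv | hv
    · have := fsub (G v) (Gn v) s hs
      rw [fG v hv] at this
      linarith
    · rw [Gneg v hv, hz]
      have := hn s hs
      nlinarith
  have hbdd : ∀ v, BddAbove (range fun s : Ici (0:ℝ) => (s : ℝ) * v - ψ s) := fun v =>
    ⟨_, by rintro _ ⟨s, rfl⟩; exact hub v s⟩
  have hle : ∀ v, ∀ s ≥ 0, s * v - ψ s ≤ conjNF ψ v := fun v s hs =>
    le_ciSup (hbdd v) ⟨s, hs⟩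
  have heq : ∀ v, conjNF ψ v = G v * v - ψ (G v) := fun v =>
    le_antisymm (ciSup_le (hub v)) (hle v _ (Gn v))
  have hsub : ∀ v w, conjNF ψ v + G v * (w - v) ≤ conjNF ψ w := by
    intro v w
    have := hle w (G v) (Gn v)
    rw [heq v]; linarith
  have hder : ∀ v, HasDerivAt (conjNF ψ) (G v) v := by
    intro v
    rw [hasDerivAt_iff_isLittleO]
    rw [Asymptotics.isLittleO_iff]
    intro ε hε
    have hev : ∀ᶠ w in 𝓝 v, |G w - G v| < ε := by
      have := (Metric.continuous_iff'.1 Gc) v ε hε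
      simpa [Real.dist_eq] using this
    filter_upwards [hev] with w hw
    have h1 := hsub v w
    have h2 := hsub w v
    rw [Real.norm_eq_abs, Real.norm_eq_abs, smul_eq_mul]
    rw [abs_of_nonneg (by linarith)]
    calc conjNF ψ w - conjNF ψ v - (w - v) * G v ≤ (G w - G v) * (w - v) := by linarith
      _ ≤ |(G w - G v) * (w - v)| := le_abs_self _
      _ = |G w - G v| * |w - v| := abs_mul _ _
      _ ≤ ε * |w - v| := by gcongr
  have hd : deriv (conjNF ψ) = G := by
    funext v; exact (hder v).deriv
  rw [hd]
  refine ⟨Gm.monotoneOn _, Gf, ?_, ?_, fun t _ s _ => hsub t s⟩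
  · rw [heq, Gneg 0 le_rfl, hz]; simp
  · intro t _
    have := hle t 0 le_rfl
    rw [hz] at this; linarith

/-- `(ψ_a)*(t) ∼ (ψ*)_{ψ'(a)}(t)` uniformly in `t, a ≥ 0`, with constants
depending only on the Δ₂-constants of `ψ` and `ψ*`. -/
theorem conj_shifted_equiv (K₁ K₂ : ℝ) :
    ∃ c > (0:ℝ), ∃ C > (0:ℝ), ∀ ψ : ℝ → ℝ, IsRegularNFunction ψ →
      SatisfiesDelta2 ψ K₁ → SatisfiesDelta2 (conjNF ψ) K₂ →
      ∀ a ≥ (0:ℝ), ∀ t ≥ (0:ℝ),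
        c * shiftNF (conjNF ψ) (deriv ψ a) t ≤ conjNF (shiftNF ψ a) t ∧
        conjNF (shiftNF ψ a) t ≤ C * shiftNF (conjNF ψ) (deriv ψ a) t := by
  have hex : ∃ n : ℕ, (K₁ ^ 2 + 2) ≤ 2 ^ n := by
    obtain ⟨n, hn⟩ := pow_unbounded_of_one_lt (K₁ ^ 2 + 2) (one_lt_two (α := ℝ))
    exact ⟨n, hn.le⟩
  obtain ⟨n, hn⟩ := hex
  set L := K₁ ^ 2 + 2 with hL
  set M := K₂ ^ 2 + 1 with hM
  have hL2 : 2 ≤ L := by nlinarith [sq_nonneg K₁]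
  have hM1 : 1 ≤ M := by nlinarith [sq_nonneg K₂]
  have hN1 : 1 ≤ M ^ n := one_le_pow₀ hM1
  refine ⟨1 / (4 * M ^ 2 * L), by positivity, 8 * M * M ^ n, by positivity, ?_⟩
  intro ψ hψ hK1 hK2 a ha t ht
  obtain ⟨f0, fm, fc, ft, fsub⟩ := regular_facts hψ
  obtain ⟨⟨-, hψ0, hψp, -, -⟩, -⟩ := hψ
  have hψn : ∀ t ≥ 0, 0 ≤ ψ t := fun t ht => by
    rcases ht.lt_or_eq with h | h
    · exact (hψp t h).le
    · rw [← h, hψ0]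
  have fn : ∀ z ≥ 0, 0 ≤ deriv ψ z := fun z hz => f0 ▸ fm.monotoneOn (by simp) hz hz
  obtain ⟨gm, gf, cz, cn, csub⟩ := conj_facts hψ0 hψn f0 fm fc ft fsub
  have g0 : deriv (conjNF ψ) 0 = 0 := by simpa [f0] using gf 0 le_rfl
  have gn : ∀ z ≥ 0, 0 ≤ deriv (conjNF ψ) z := fun z hz => g0 ▸ gm (by simp) hz hz
  have fL := doubling_aux hψn hψ0 fn f0 fsub hK1
  have gL := doubling_aux cn cz gn g0 csub hK2
  have gM : ∀ t ≥ 0, deriv (conjNF ψ) (2 * t) ≤ M * deriv (conjNF ψ) t := fun t ht => by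
    have := gL t ht; have := gn t ht; simp only [hM]; linarith
  have gpow : ∀ m : ℕ, ∀ t ≥ 0, deriv (conjNF ψ) (2 ^ m * t) ≤ M ^ m * deriv (conjNF ψ) t := by
    intro m
    induction m with
    | zero => intro t ht; simp
    | succ m ih =>
      intro t ht
      calc deriv (conjNF ψ) (2 ^ (m + 1) * t) = deriv (conjNF ψ) (2 * (2 ^ m * t)) := by
            congr 1; ring
        _ ≤ M * deriv (conjNF ψ) (2 ^ m * t) := gM _ (by positivity)
        _ ≤ M * (M ^ m * deriv (conjNF ψ) t) := by gcongr; exact ih t ht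
        _ = _ := by ring
  exact core f0 fm fc ft gm gf hL2 hM1 hN1
    (fun t ht => by have := fL t ht; have := fn t ht; simp only [hL]; linarith) gM
    (fun t ht => (gm (by simp; positivity) (by simp; positivity) (by gcongr)).trans (gpow n t ht))
    ha t ht

end
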